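/- arXiv:1802.03857 — 2 statements merged into one kernel-verified Lean document; each statement's English description precedes it below -/
import Mathlib

section
/- Let q be a quadratic form over a field F of characteristic not 2, and let F'/F be a field extension of odd degree. Then the Witt index of q over F' equals the Witt index of q over F. -/
open TensorProduct

/-- The Witt index of a quadratic form: the supremum of the dimensions of
totally isotropic subspaces. -/
noncomputable def wittIndex (F : Type*) [Field F] {V : Type*} [AddCommGroup V] [Module F V]
    (Q : QuadraticForm F V) : ℕ :=
  sSup {n | ∃ W : Submodule F V, (∀ x ∈ W, Q x = 0) ∧ Module.finrank F ↥W = n}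

section
open Polynomial

theorem exists_odd_irred {F : Type*} [Field F] : ∀ (n : ℕ) (h : F[X]), h.natDegree = n → Odd n →
    ∃ p, Irreducible p ∧ p ∣ h ∧ Odd p.natDegree := by
  intro n
  induction n using Nat.strong_induction_on with
  | _ n ih =>
  intro h hn ho
  have h0 : h ≠ 0 := by rintro rfl; simp at hn; subst hn; simp at ho
  have hu : ¬ IsUnit h := by
    intro hu
    have := natDegree_eq_zero_of_isUnit hu
    rw [this] at hn; subst hn; simp at ho
  obtain ⟨p, hp, k, hk⟩ := WfDvdMonoid.exists_irreducible_factor hu h0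
  by_cases hpo : Odd p.natDegree
  · exact ⟨p, hp, ⟨k, hk⟩, hpo⟩
  have hk0 : k ≠ 0 := by rintro rfl; simp at hk; exact h0 hk
  have hd : h.natDegree = p.natDegree + k.natDegree := by rw [hk, natDegree_mul hp.ne_zero hk0]
  have hpp := hp.natDegree_pos
  have hko : Odd k.natDegree := by
    rw [Nat.not_odd_iff_even] at hpo
    rw [← hn, hd] at ho
    grind
  obtain ⟨p', h1, h2, h3⟩ := ih k.natDegree (by omega) k rfl hko
  exact ⟨p', h1, h2.trans ⟨p, by rw [hk, mul_comm]⟩, h3⟩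

theorem springer_poly {F : Type*} [Field F] {ι : Type*} [Fintype ι] (w : ι → F)
    (hw : ∀ x : ι → F, ∑ i, w i * x i ^ 2 = 0 → x = 0) :
    ∀ (n : ℕ) (p : F[X]), p.natDegree = n → Irreducible p → Odd n →
      ∀ f : ι → F[X], p ∣ ∑ i, C (w i) * f i ^ 2 → ∀ i, p ∣ f i := by
  classical
  intro n
  induction n using Nat.strong_induction_on with
  | _ n ih =>
  intro p hpn hp hn f hf
  by_contra! hcon
  obtain ⟨i₀, hi₀⟩ := hcon
  -- reduce mod p
  let g : ι → F[X] := fun i => f i % p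
  have hg : p ∣ ∑ i, C (w i) * g i ^ 2 := by
    have : p ∣ ∑ i, C (w i) * f i ^ 2 - ∑ i, C (w i) * g i ^ 2 := by
      rw [← Finset.sum_sub_distrib]
      refine Finset.dvd_sum fun i _ => ?_
      have h1 : p ∣ f i - g i := by
        exact ⟨f i / p, by rw [sub_eq_iff_eq_add]; exact (EuclideanDomain.div_add_mod _ _).symm⟩
      have : C (w i) * f i ^ 2 - C (w i) * g i ^ 2 = (f i - g i) * (C (w i) * (f i + g i)) := by ring
      rw [this]; exact h1.mul_right _
    exact (dvd_sub_right hf).1 this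
  have hg0 : g i₀ ≠ 0 := fun h => hi₀ (EuclideanDomain.mod_eq_zero.1 h)
  have hgd : ∀ i, g i = 0 ∨ (g i).natDegree < n := by
    intro i
    right
    rw [← hpn]
    exact natDegree_mod_lt _ (by have := hp.natDegree_pos; omega)
  obtain ⟨e, he, he1⟩ := Finset.extract_gcd g (s := Finset.univ) ⟨i₀, Finset.mem_univ _⟩
  set c := Finset.univ.gcd g with hc
  have hc0 : c ≠ 0 := by
    intro h
    have := he i₀ (Finset.mem_univ _)
    rw [h, zero_mul] at this; exact hg0 this
  have hpc : ¬ p ∣ c := by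
    intro h
    have h1 : p ∣ g i₀ := by rw [he i₀ (Finset.mem_univ _)]; exact h.mul_right _
    have := natDegree_le_of_dvd h1 hg0
    rcases hgd i₀ with h | h
    · exact hg0 h
    · omega
  have hed : ∀ i, (e i).natDegree < n := by
    intro i
    by_cases hei : e i = 0
    · rw [hei]; simp; exact hn.pos
    · have h1 := he i (Finset.mem_univ _)
      have h2 : g i ≠ 0 := by rw [h1]; exact mul_ne_zero hc0 hei
      have h3 : (g i).natDegree = c.natDegree + (e i).natDegree := by rw [h1, natDegree_mul hc0 hei]
      rcases hgd i with h | h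
      · exact absurd h h2
      · omega
  have hpe : p ∣ ∑ i, C (w i) * e i ^ 2 := by
    have : ∑ i, C (w i) * g i ^ 2 = c ^ 2 * ∑ i, C (w i) * e i ^ 2 := by
      rw [Finset.mul_sum]
      refine Finset.sum_congr rfl fun i hi => ?_
      rw [he i hi]; ring
    rw [this] at hg
    rcases hp.prime.dvd_or_dvd hg with h | h
    · exact absurd (hp.prime.dvd_of_dvd_pow h) hpc
    · exact h
  obtain ⟨h, hh⟩ := hpe
  -- max degree
  obtain ⟨j, -, hj⟩ := Finset.exists_max_image Finset.univ (fun i => (e i).degree) ⟨i₀, Finset.mem_univ _⟩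
  have hej : e j ≠ 0 := by
    intro h0
    have : e i₀ = 0 := by
      have := hj i₀ (Finset.mem_univ _)
      simpa [h0] using this
    exact hg0 (by rw [he i₀ (Finset.mem_univ _), this, mul_zero])
  set d := (e j).natDegree with hd
  have hle : ∀ i, (e i).natDegree ≤ d := fun i => natDegree_le_natDegree (hj i (Finset.mem_univ _))
  have hS : (∑ i, C (w i) * e i ^ 2).natDegree ≤ 2 * d := by
    refine natDegree_sum_le_of_forall_le _ _ fun i _ => ?_
    refine (natDegree_C_mul_le _ _).trans ?_
    refine natDegree_pow_le.trans ?_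
    have := hle i
    omega
  have hco : (∑ i, C (w i) * e i ^ 2).coeff (2 * d) = ∑ i, w i * (e i).coeff d ^ 2 := by
    rw [finsetSum_coeff]
    refine Finset.sum_congr rfl fun i _ => ?_
    rw [coeff_C_mul, coeff_pow_of_natDegree_le (hle i)]
  have hne : (∑ i, C (w i) * e i ^ 2).coeff (2 * d) ≠ 0 := by
    rw [hco]
    intro h0
    have := congrFun (hw _ h0) j
    simp only [Pi.zero_apply] at this
    exact hej (leadingCoeff_eq_zero.1 this)
  have hdeg : (∑ i, C (w i) * e i ^ 2).natDegree = 2 * d :=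
    le_antisymm hS (le_natDegree_of_ne_zero hne)
  have hh0 : h ≠ 0 := by
    rintro rfl
    rw [hh] at hne; simp at hne
  rw [hh, natDegree_mul hp.ne_zero hh0, hpn] at hdeg
  have hdn := hed j
  obtain ⟨p', hp', hp'h, hp'o⟩ := exists_odd_irred h.natDegree h rfl (by grind)
  have hle' := natDegree_le_of_dvd hp'h hh0
  have := ih p'.natDegree (by omega) p' rfl hp' hp'o e (by rw [hh]; exact hp'h.mul_left _)
  have h1 : p' ∣ Finset.univ.gcd e := Finset.dvd_gcd fun i _ => this i
  rw [he1] at h1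
  exact hp'.not_isUnit (isUnit_of_dvd_one h1)

open IntermediateField in
theorem springer_field : ∀ (n : ℕ) (F K : Type) [Field F] [Field K] [Algebra F K]
    [FiniteDimensional F K] (_ : Module.finrank F K = n) (_ : Odd n) (ι : Type) [Fintype ι]
    (w : ι → F) (_ : ∀ x : ι → F, ∑ i, w i * x i ^ 2 = 0 → x = 0)
    (x : ι → K) (_ : ∑ i, algebraMap F K (w i) * x i ^ 2 = 0), x = 0 := by
  intro n
  induction n using Nat.strong_induction_on with
  | _ n ih =>
  intro F K _ _ _ _ hn ho ι _ w hw x hx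
  by_cases hall : ∀ a : K, a ∈ (⊥ : IntermediateField F K)
  · choose y hy using fun i => IntermediateField.mem_bot.1 (hall (x i))
    have : y = 0 := by
      apply hw
      apply (algebraMap F K).injective
      simp only [map_sum, map_mul, map_pow, map_zero, hy]
      exact hx
    funext i
    rw [← hy, this]; simp
  push Not at hall
  obtain ⟨a, ha⟩ := hall
  have hint : IsIntegral F a := IsIntegral.of_finite F a
  have hmul := Module.finrank_mul_finrank F F⟮a⟯ K
  have hfr := IntermediateField.adjoin.finrank hint
  have hne : Module.finrank F F⟮a⟯ ≠ 1 := by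
    rw [Ne, IntermediateField.finrank_adjoin_simple_eq_one_iff]
    exact ha
  have hpos : 0 < Module.finrank F F⟮a⟯ := Module.finrank_pos
  have hpos' : 0 < Module.finrank F⟮a⟯ K := Module.finrank_pos
  rw [hn] at hmul
  rw [← hmul, Nat.odd_mul] at ho
  refine ih (Module.finrank F⟮a⟯ K) (by nlinarith [show 2 ≤ Module.finrank F F⟮a⟯ by omega]) F⟮a⟯ K rfl ho.2 ι
    (fun i => algebraMap F F⟮a⟯ (w i)) ?_ x ?_
  · intro y hy
    let pb := IntermediateField.adjoin.powerBasis hint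
    choose f hf using fun i => pb.exists_eq_aeval' (y i)
    have hirr : Irreducible (minpoly F a) := minpoly.irreducible hint
    have hm : minpoly F pb.gen = minpoly F a := by
      simp [pb, IntermediateField.minpoly_gen]
    have := springer_poly w hw _ (minpoly F a) rfl hirr (hfr ▸ ho.1) f (by
      rw [← hm]
      apply minpoly.dvd
      rw [map_sum, ← hy]
      refine Finset.sum_congr rfl fun i _ => ?_
      rw [map_mul, map_pow, aeval_C, ← hf])
    funext i
    rw [hf]
    obtain ⟨k, hk⟩ := this i
    rw [hk, map_mul, ← hm, minpoly.aeval, zero_mul]; rfl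
  · rw [← hx]
    refine Finset.sum_congr rfl fun i _ => ?_
    rw [← IsScalarTower.algebraMap_apply]

end

theorem assoc_zero_of_isotropic {K V : Type*} [Field K] [Invertible (2 : K)] [AddCommGroup V]
    [Module K V] (Q : QuadraticForm K V) (W : Submodule K V) (hW : ∀ x ∈ W, Q x = 0)
    {x y : V} (hx : x ∈ W) (hy : y ∈ W) : QuadraticMap.associated (R := K) Q x y = 0 := by
  rw [QuadraticMap.associated_apply, hW _ (W.add_mem hx hy), hW _ hx, hW _ hy]
  simp

theorem map_add_assoc {K V : Type*} [Field K] [Invertible (2 : K)] [AddCommGroup V]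
    [Module K V] (Q : QuadraticForm K V) (x y : V) :
    Q (x + y) = Q x + Q y + 2 * QuadraticMap.associated (R := K) Q x y := by
  have h := QuadraticMap.two_nsmul_associated K Q
  have h2 := LinearMap.congr_fun (LinearMap.congr_fun h x) y
  simp only [LinearMap.smul_apply, QuadraticMap.polarBilin_apply_apply, QuadraticMap.polar,
    nsmul_eq_mul, Nat.cast_ofNat] at h2
  rw [h2]; ring

/-- Two subspaces, `U` totally isotropic and `U ⊓ W^⊥ ≤ W`. -/
theorem finrank_le_aux {K V : Type*} [Field K] [AddCommGroup V] [Module K V]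
    [FiniteDimensional K V] (B : LinearMap.BilinForm K V) (U W : Submodule K V)
    (hU : ∀ x ∈ U, ∀ y ∈ U, B x y = 0)
    (h : ∀ x ∈ U, (∀ y ∈ W, B x y = 0) → x ∈ W) :
    Module.finrank K U ≤ Module.finrank K W := by
  obtain ⟨C, hC⟩ := Submodule.exists_isCompl (U ⊓ W)
  have e1 : (U ⊓ W) ⊔ (C ⊓ U) = U := by
    rw [← sup_inf_assoc_of_le C (inf_le_left : U ⊓ W ≤ U), hC.sup_eq_top, top_inf_eq]
  have e2 : (U ⊓ W) ⊔ (C ⊓ W) = W := by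
    rw [← sup_inf_assoc_of_le C (inf_le_right : U ⊓ W ≤ W), hC.sup_eq_top, top_inf_eq]
  have d1 : (U ⊓ W) ⊓ (C ⊓ U) = ⊥ := by
    rw [← inf_assoc, hC.inf_eq_bot, bot_inf_eq]
  have d2 : (U ⊓ W) ⊓ (C ⊓ W) = ⊥ := by
    rw [← inf_assoc, hC.inf_eq_bot, bot_inf_eq]
  have f1 := Submodule.finrank_sup_add_finrank_inf_eq (U ⊓ W) (C ⊓ U)
  have f2 := Submodule.finrank_sup_add_finrank_inf_eq (U ⊓ W) (C ⊓ W)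
  rw [e1, d1, finrank_bot] at f1
  rw [e2, d2, finrank_bot] at f2
  let φ : ↥(C ⊓ U) →ₗ[K] Module.Dual K ↥(C ⊓ W) := B.domRestrict₁₂ (C ⊓ U) (C ⊓ W)
  have hφ : Function.Injective φ := by
    rw [← LinearMap.ker_eq_bot, LinearMap.ker_eq_bot']
    rintro ⟨u, hu⟩ h0
    have hu' : ∀ y ∈ C ⊓ W, B u y = 0 := fun y hy => LinearMap.congr_fun h0 ⟨y, hy⟩
    have huW : u ∈ W := by
      refine h u hu.2 fun y hy => ?_
      rw [← e2] at hy
      obtain ⟨a, ha, b, hb, rfl⟩ := Submodule.mem_sup.1 hy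
      rw [map_add, hU u hu.2 a ha.1, hu' b hb, add_zero]
    have : u ∈ (U ⊓ W) ⊓ (C ⊓ U) := ⟨⟨hu.2, huW⟩, hu⟩
    rw [d1] at this
    exact Subtype.ext ((Submodule.mem_bot K).1 this)
  have := LinearMap.finrank_le_finrank_of_injective hφ
  rw [Subspace.dual_finrank_eq] at this
  omega

theorem isotropic_baseChange {F V F' : Type*} [Field F] [Invertible (2 : F)]
    [AddCommGroup V] [Module F V] (Q : QuadraticForm F V)
    [Field F'] [Algebra F F'] [Invertible (2 : F')]
    (W : Submodule F V) (hW : ∀ x ∈ W, Q x = 0) :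
    ∀ x ∈ W.baseChange F', Q.baseChange F' x = 0 := by
  have key : ∀ x ∈ W.baseChange F', ∀ y ∈ W.baseChange F',
      LinearMap.BilinForm.baseChange F' (QuadraticMap.associated (R := F) Q) x y = 0 := by
    intro x hx y hy
    rw [Submodule.baseChange_eq_span] at hx hy
    induction hx using Submodule.span_induction with
    | zero => simp
    | add a b _ _ ha hb => rw [map_add, LinearMap.add_apply, ha, hb, add_zero]
    | smul c a _ ha => rw [map_smul, LinearMap.smul_apply, ha, smul_zero]
    | mem a ha =>
      obtain ⟨a, ha, rfl⟩ := ha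
      induction hy using Submodule.span_induction with
      | zero => simp
      | add a b _ _ ha hb => rw [map_add, ha, hb, add_zero]
      | smul c a _ ha => rw [map_smul, ha, smul_zero]
      | mem b hb =>
        obtain ⟨b, hb, rfl⟩ := hb
        simp only [TensorProduct.mk_apply, LinearMap.BilinForm.baseChange_tmul]
        rw [assoc_zero_of_isotropic Q W hW ha hb, zero_smul]
  intro x hx
  rw [← QuadraticMap.associated_eq_self_apply F', ]
  erw [QuadraticForm.associated_baseChange]
  exact key x hx x hx

theorem aniso_baseChange {F V F' : Type} [Field F] [Invertible (2 : F)]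
    [AddCommGroup V] [Module F V] [FiniteDimensional F V] (Q : QuadraticForm F V)
    [Field F'] [Algebra F F'] [Invertible (2 : F')] [FiniteDimensional F F']
    (hodd : Odd (Module.finrank F F'))
    (A : Submodule F V) (hA : ∀ x ∈ A, Q x = 0 → x = 0) :
    ∀ x ∈ A.baseChange F', Q.baseChange F' x = 0 → x = 0 := by
  intro x hx hQx
  obtain ⟨v, hv⟩ := LinearMap.BilinForm.exists_orthogonal_basis
    (B := QuadraticMap.associated (R := F) (Q.comp A.subtype))
    (QuadraticForm.associated_isSymm F _)
  have hv' : ∀ i j, i ≠ j → QuadraticMap.associated (R := F) Q (v i : V) (v j) = 0 := by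
    intro i j hij
    have := hv hij
    simpa [Function.onFun, QuadraticMap.associated_apply] using this
  have hsum : ∀ (K : Type) [Field K] [Algebra F K] [Invertible (2 : K)] (c : Fin (Module.finrank F A) → K),
      Q.baseChange K (∑ i, c i ⊗ₜ[F] (v i : V)) =
        ∑ i, algebraMap F K (Q (v i)) * c i ^ 2 := by
    intro K _ _ _ c
    rw [← QuadraticMap.associated_eq_self_apply K]
    erw [QuadraticForm.associated_baseChange]
    rw [map_sum]
    refine Finset.sum_congr rfl fun i _ => ?_
    rw [map_sum, LinearMap.sum_apply, Finset.sum_eq_single i]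
    · rw [LinearMap.BilinForm.baseChange_tmul, QuadraticMap.associated_eq_self_apply,
        Algebra.smul_def, pow_two]
    · intro j _ hj
      rw [LinearMap.BilinForm.baseChange_tmul, hv' _ _ hj, zero_smul]
    · simp
  obtain ⟨t, ht⟩ := A.toBaseChange_surjective' F' hx
  obtain ⟨c, hc⟩ : ∃ c : Fin (Module.finrank F A) → F', t = ∑ i, c i ⊗ₜ[F] v i := by
    refine ⟨fun i => (Algebra.TensorProduct.basis F' v).repr t i, ?_⟩
    conv_lhs => rw [← (Algebra.TensorProduct.basis F' v).sum_repr t]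
    simp [TensorProduct.smul_tmul']
  have hxc : x = ∑ i, c i ⊗ₜ[F] (v i : V) := by
    rw [← ht, hc]
    rw [map_sum, Submodule.coe_sum]
    rfl
  have hc0 := springer_field _ F F' rfl hodd _ (fun i => Q (v i)) (by
    intro y hy
    have h1 : Q (∑ i, y i • (v i : V)) = 0 := by
      rw [← QuadraticMap.associated_eq_self_apply F, map_sum, ← hy]
      refine Finset.sum_congr rfl fun i _ => ?_
      rw [map_sum, LinearMap.sum_apply, Finset.sum_eq_single i]
      · rw [map_smul, map_smul, LinearMap.smul_apply, QuadraticMap.associated_eq_self_apply]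
        simp only [smul_eq_mul]; ring
      · intro j _ hj
        rw [map_smul, map_smul, LinearMap.smul_apply, hv' _ _ hj]
        simp
      · simp
    have h2 := hA _ (A.sum_mem fun i _ => A.smul_mem _ (v i).2) h1
    have h3 : ∑ i, y i • v i = 0 := by
      apply Subtype.ext; simpa using h2
    funext i
    exact Fintype.linearIndependent_iff.1 v.linearIndependent y h3 i) c
    (by rw [← hsum, ← hxc, hQx])
  rw [hxc, hc0]; simp

theorem wittIndex_bdd {K V : Type*} [Field K] [AddCommGroup V] [Module K V]
    [FiniteDimensional K V] (Q : QuadraticForm K V) :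
    BddAbove {n | ∃ W : Submodule K V, (∀ x ∈ W, Q x = 0) ∧ Module.finrank K ↥W = n} := by
  refine ⟨Module.finrank K V, ?_⟩
  rintro n ⟨W, -, rfl⟩
  exact W.finrank_le

theorem wittIndex_nonempty {K V : Type*} [Field K] [AddCommGroup V] [Module K V]
    (Q : QuadraticForm K V) :
    {n | ∃ W : Submodule K V, (∀ x ∈ W, Q x = 0) ∧ Module.finrank K ↥W = n}.Nonempty := by
  refine ⟨_, ⊥, ?_, rfl⟩
  intro x hx
  rw [(Submodule.mem_bot K).1 hx, QuadraticMap.map_zero]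

/-- Springer's theorem: the Witt index of a nondegenerate quadratic form is unchanged
under an odd-degree field extension (char F ≠ 2). -/
theorem wittIndex_odd_extension
    (F : Type) [Field F] [Invertible (2 : F)]
    (V : Type) [AddCommGroup V] [Module F V] [FiniteDimensional F V]
    (Q : QuadraticForm F V)
    (hQ : LinearMap.BilinForm.Nondegenerate (QuadraticMap.associated (R := F) Q))
    (F' : Type) [Field F'] [Algebra F F'] [FiniteDimensional F F']
    (hodd : Odd (Module.finrank F F')) :
    wittIndex F' (Q.baseChange F') = wittIndex F Q := by
  have : Invertible (2 : F') :=
    (Invertible.map (algebraMap F F') (2 : F)).copy 2 (by rw [map_ofNat])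
  obtain ⟨W, hW, hWr⟩ := Nat.sSup_mem (wittIndex_nonempty Q) (wittIndex_bdd Q)
  change _ = wittIndex F Q at hWr
  have hW' := isotropic_baseChange (F' := F') Q W hW
  have hr : Module.finrank F' (W.baseChange F') = wittIndex F Q := by
    rw [← hWr, ← (Submodule.toBaseChange.toLinearEquiv F' W).finrank_eq,
      Module.finrank_baseChange]
  have hmaxW : ∀ a, Q a = 0 → (∀ w ∈ W, QuadraticMap.associated (R := F) Q a w = 0) → a ∈ W := by
    intro a ha haw
    have hle : Module.finrank F ↥(W ⊔ Submodule.span F {a}) ≤ Module.finrank F W := by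
      rw [hWr]
      refine le_csSup (wittIndex_bdd Q) ⟨_, ?_, rfl⟩
      intro x hx
      obtain ⟨w, hw, b, hb, rfl⟩ := Submodule.mem_sup.1 hx
      obtain ⟨c, rfl⟩ := Submodule.mem_span_singleton.1 hb
      rw [add_comm, map_add_assoc, QuadraticMap.map_smul, ha, hW w hw, map_smul,
        LinearMap.smul_apply, haw w hw]
      simp
    have := Submodule.eq_of_le_of_finrank_le (le_sup_left : W ≤ W ⊔ Submodule.span F {a}) hle
    rw [this]
    exact Submodule.mem_sup_right (Submodule.mem_span_singleton_self a)
  apply le_antisymm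
  · refine csSup_le (wittIndex_nonempty _) ?_
    rintro n ⟨U, hU, rfl⟩
    rw [← hr]
    refine finrank_le_aux (QuadraticMap.associated (R := F') (Q.baseChange F')) U _
      (fun x hx y hy => assoc_zero_of_isotropic _ U hU hx hy) ?_
    intro x hxU hx
    have hQx := hU x hxU
    -- the orthogonal complement
    let P : Submodule F V := LinearMap.BilinForm.orthogonal (QuadraticMap.associated (R := F) Q) W
    have hP : ∀ v, v ∈ P ↔ ∀ w ∈ W, QuadraticMap.associated (R := F) Q w v = 0 := fun v => Iff.rfl
    have hWP : W ≤ P := fun v hv => (hP v).2 fun w hw => assoc_zero_of_isotropic Q W hW hw hv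
    obtain ⟨C, hC⟩ := Submodule.exists_isCompl W
    have e1 : W ⊔ (C ⊓ P) = P := by
      rw [← sup_inf_assoc_of_le C hWP, hC.sup_eq_top, top_inf_eq]
    have hA : ∀ a ∈ C ⊓ P, Q a = 0 → a = 0 := by
      intro a ha h0
      have h1 : a ∈ W := hmaxW a h0 fun w hw => by
        rw [QuadraticMap.associated_isSymm]; exact (hP a).1 ha.2 w hw
      have : a ∈ W ⊓ C := ⟨h1, ha.1⟩
      rw [hC.inf_eq_bot] at this
      exact (Submodule.mem_bot F).1 this
    have hA' := aniso_baseChange (F' := F') Q hodd (C ⊓ P) hA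
    classical
    let b := Module.finBasis F F'
    let f := TensorProduct.equivFinsuppOfBasisLeft (N := V) b x
    have hf : x = ∑ i, b i ⊗ₜ[F] f i := by
      have := (TensorProduct.equivFinsuppOfBasisLeft (N := V) b).symm_apply_apply x
      rw [TensorProduct.equivFinsuppOfBasisLeft_symm_apply, Finsupp.sum_fintype _ _ (by simp)] at this
      exact this.symm
    have hfP : ∀ i, f i ∈ P := by
      intro i
      rw [hP]
      intro w hw
      have h1 := hx (1 ⊗ₜ w) (Submodule.tmul_mem_baseChange_of_mem 1 hw)
      erw [QuadraticForm.associated_baseChange] at h1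
      rw [hf, map_sum, LinearMap.sum_apply] at h1
      simp only [LinearMap.BilinForm.baseChange_tmul, mul_one] at h1
      rw [QuadraticMap.associated_isSymm]
      exact Fintype.linearIndependent_iff.1 b.linearIndependent _ h1 i
    have hdec : ∀ i, ∃ w ∈ W, ∃ a ∈ C ⊓ P, w + a = f i := fun i =>
      Submodule.mem_sup.1 (by rw [e1]; exact hfP i)
    choose w hw a ha hwa using hdec
    have hy : ∑ i, b i ⊗ₜ[F] w i ∈ W.baseChange F' :=
      Submodule.sum_mem _ fun i _ => Submodule.tmul_mem_baseChange_of_mem _ (hw i)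
    have hz : ∑ i, b i ⊗ₜ[F] a i ∈ (C ⊓ P).baseChange F' :=
      Submodule.sum_mem _ fun i _ => Submodule.tmul_mem_baseChange_of_mem _ (ha i)
    have hxyz : x = ∑ i, b i ⊗ₜ[F] w i + ∑ i, b i ⊗ₜ[F] a i := by
      rw [← Finset.sum_add_distrib, hf]
      refine Finset.sum_congr rfl fun i _ => ?_
      rw [← TensorProduct.tmul_add, hwa]
    generalize ∑ i, b i ⊗ₜ[F] w i = y at hy hxyz
    generalize ∑ i, b i ⊗ₜ[F] a i = z at hz hxyz
    have hz0 : z = 0 := by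
      apply hA' z hz
      have : z = x + -y := by rw [hxyz]; abel
      rw [this, map_add_assoc, QuadraticMap.map_neg, map_neg, hx y hy, hW' y hy, hQx]
      simp
    rw [hxyz, hz0, add_zero]
    exact hy
  · exact le_csSup (wittIndex_bdd _) ⟨_, hW', hr⟩
end

section
/- Let q and q' be nondegenerate quadratic forms over F (char ≠ 2) of the same even dimension such that i_w(q_M) = i_w(q'_M) for every field extension M/F. Then q and q' have the same signed discriminant. -/
/-- The Witt index over `M` of the diagonal quadratic form with entries `w : Fin d → F`,
extended to a field extension `M/F`. -/
noncomputable def wittIndexDiag (F : Type) [Field F] (M : Type) [Field M] [Algebra F M]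
    {d : ℕ} (w : Fin d → F) : ℕ :=
  sSup {r | ∃ W : Submodule M (Fin d → M),
    (∀ x ∈ W, ∑ i, algebraMap F M (w i) * x i ^ 2 = 0) ∧ Module.finrank M ↥W = r}

section aux
open Polynomial

theorem lin_aux {K : Type} [Field K] (u v : K) (h : C u * X + C v = 0) : u = 0 ∧ v = 0 := by
  have k1 := congrArg (fun p => coeff p 1) h
  have k0 := congrArg (fun p => coeff p 0) h
  constructor
  · simpa [coeff_C] using k1
  · simpa using k0

theorem quad_aux {K : Type} [Field K] (u v w : K) (h : C u * X^2 + C v * X + C w = 0) : u = 0 ∧ v = 0 ∧ w = 0 := by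
  have k2 := congrArg (fun p => coeff p 2) h
  have k1 := congrArg (fun p => coeff p 1) h
  have k0 := congrArg (fun p => coeff p 0) h
  refine ⟨?_, ?_, ?_⟩
  · simpa [coeff_C, coeff_X] using k2
  · simpa [coeff_C, coeff_X] using k1
  · simpa using k0

theorem lemQ (K : Type) [Field K] (h2 : (2:K) ≠ 0) (e : K) : ∃ (L : Type) (_ : Field L) (g : K →+* L) (s : L), s^2 = g e ∧ ∀ c, IsSquare (g c) → IsSquare c ∨ IsSquare (c*e) := by
  by_cases he : IsSquare e
  · obtain ⟨r, hr⟩ := he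
    exact ⟨K, inferInstance, RingHom.id K, r, by simp [hr, sq], fun c hc => Or.inl hc⟩
  · have hirr : Irreducible (X^2 - C e : K[X]) := by
      rw [X_pow_sub_C_irreducible_iff_of_prime Nat.prime_two]
      intro b hb; exact he ⟨b, by rw [← hb, sq]⟩
    have : Fact (Irreducible (X^2 - C e : K[X])) := ⟨hirr⟩
    have hs : (AdjoinRoot.root (X^2 - C e : K[X]))^2 = AdjoinRoot.of _ e := by
      have := AdjoinRoot.eval₂_root (X^2 - C e : K[X])
      simp only [eval₂_sub, eval₂_pow, eval₂_X, eval₂_C] at this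
      exact sub_eq_zero.mp this
    refine ⟨AdjoinRoot (X^2 - C e : K[X]), inferInstance, AdjoinRoot.of _, AdjoinRoot.root _, hs, ?_⟩
    rintro c ⟨y, hy⟩
    have hm : (X^2 - C e : K[X]).Monic := monic_X_pow_sub_C e two_ne_zero
    have hd : (X^2 - C e : K[X]).natDegree = 2 := natDegree_X_pow_sub_C
    obtain ⟨p, hp⟩ := AdjoinRoot.mk_surjective y
    have h1 : (p %ₘ (X^2 - C e)).natDegree ≤ 1 := by
      have := natDegree_modByMonic_lt p hm (by intro h; rw [h] at hd; simp at hd)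
      omega
    obtain ⟨a, b, hab⟩ := exists_eq_X_add_C_of_natDegree_le_one h1
    have hy' : y = AdjoinRoot.mk (X^2 - C e) (C a * X + C b) := by
      rw [← hab, ← hp, AdjoinRoot.mk_eq_mk]
      exact ⟨p /ₘ (X^2 - C e), by rw [← modByMonic_add_div p (X^2 - C e)]; simp [modByMonic_add_div]; rw [sub_eq_iff_eq_add']; exact (modByMonic_add_div p _).symm⟩
    have hz : AdjoinRoot.mk (X^2 - C e) (C (2*a*b) * X + C (a^2*e+b^2-c)) = 0 := by
      rw [hy'] at hy
      simp only [map_add, map_mul, AdjoinRoot.mk_C, AdjoinRoot.mk_X, map_sub, map_pow, map_ofNat] at hy ⊢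
      rw [← hs, hy]; ring
    rw [AdjoinRoot.mk_eq_zero] at hz
    have hz' : (C (2*a*b) * X + C (a^2*e+b^2-c) : K[X]) = 0 := by
      apply eq_zero_of_dvd_of_natDegree_lt hz
      rw [hd]; exact lt_of_le_of_lt natDegree_linear_le one_lt_two
    obtain ⟨k1, k0⟩ := lin_aux _ _ hz'
    simp only [mul_eq_zero, h2, false_or] at k1
    rcases k1 with k1 | k1
    · left; exact ⟨b, by subst k1; linear_combination -k0⟩
    · right; exact ⟨a*e, by subst k1; linear_combination -e * k0⟩

theorem sq_poly (K : Type) [Field K] (p : K[X]) (h : IsSquare (algebraMap K[X] (RatFunc K) p)) : IsSquare p := by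
  obtain ⟨y, hy⟩ := h
  obtain ⟨r, hr⟩ := IsIntegrallyClosed.exists_algebraMap_eq_of_isIntegral_pow (R := K[X]) (K := RatFunc K) (x := y) (n := 2) (by norm_num) (by rw [sq, ← hy]; exact isIntegral_algebraMap)
  refine ⟨r, ?_⟩
  apply IsFractionRing.injective K[X] (RatFunc K)
  rw [hy, ← hr, map_mul]

theorem conic (K : Type) [Field K] (h2 : (2:K) ≠ 0) (a b c d : K) (ha : a ≠ 0) (hb : b ≠ 0) (hc : c ≠ 0) (hd : ¬ IsSquare d) :
    ∃ (L : Type) (_ : Field L) (g : K →+* L) (s x : L), s ≠ 0 ∧ g a * s^2 + g b + g c * x^2 = 0 ∧ ¬ IsSquare (g d) := by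
  have hd0 : d ≠ 0 := by rintro rfl; exact hd ⟨0, by simp⟩
  let j : K →+* RatFunc K := (algebraMap K[X] (RatFunc K)).comp C
  have hj2 : (2 : RatFunc K) ≠ 0 := by
    have := (map_ne_zero j).2 h2
    rwa [map_ofNat] at this
  let P : K[X] := C (-a) * (C b + C c * X^2)
  obtain ⟨L, iL, g, s, hs, hL⟩ := lemQ (RatFunc K) hj2 (algebraMap _ _ P)
  have hP : P ≠ 0 := by
    intro h
    have := congrArg (fun p => coeff p 0) h
    simp [P, ha, hb] at this
  have hP' : s ≠ 0 := by
    rintro rfl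
    have h3 : g (algebraMap K[X] (RatFunc K) P) = 0 := by rw [← hs]; simp
    rw [map_eq_zero] at h3
    exact hP ((map_eq_zero_iff _ (IsFractionRing.injective K[X] (RatFunc K))).1 h3)
  have hga : g (j a) ≠ 0 := by simpa using ha
  refine ⟨L, iL, g.comp j, s / g (j a), g (algebraMap K[X] (RatFunc K) X), div_ne_zero hP' hga, ?_, ?_⟩
  · have : s^2 = - g (j a) * (g (j b) + g (j c) * g (algebraMap K[X] (RatFunc K) X)^2) := by
      rw [hs]; simp [P, j]
    simp only [RingHom.comp_apply] at *
    rw [div_pow, this]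
    field_simp
    ring
  · intro h
    rcases hL (j d) h with h | h
    · obtain ⟨r, hr⟩ := sq_poly K (C d) h
      apply hd
      exact ⟨r.eval 0, by rw [← eval_mul, ← hr]; simp⟩
    · have h' : IsSquare (C d * P) := by
        apply sq_poly; rw [map_mul]; exact h
      obtain ⟨r, hr⟩ := h'
      have hr' : r * r = C (-d*a*c) * X^2 + C 0 * X + C (-d*a*b) := by
        rw [← hr]; simp only [P, map_mul, map_neg, map_zero]; ring
      have hdeg : (r*r).natDegree = 2 := by
        rw [hr']; exact natDegree_quadratic (by simp [*])
      rw [natDegree_mul' (by intro h; rw [mul_self_eq_zero, leadingCoeff_eq_zero] at h; rw [h] at hdeg; simp at hdeg)] at hdeg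
      obtain ⟨u, v, huv⟩ := exists_eq_X_add_C_of_natDegree_le_one (p := r) (by omega)
      have hr2 : C (u*u) * X^2 + C (2*u*v) * X + C (v*v) = C (-d*a*c) * X^2 + C 0 * X + C (-d*a*b) := by
        rw [← hr', huv]; simp only [map_mul, map_ofNat]; ring
      obtain ⟨k2, k1, k0⟩ := quad_aux (u*u - (-d*a*c)) (2*u*v) (v*v - (-d*a*b)) (by
        rw [← sub_eq_zero] at hr2
        rw [← hr2]; simp only [map_sub, map_zero]; ring)
      simp only [mul_eq_zero, h2, false_or] at k1
      rcases k1 with rfl | rfl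
      · simp [*] at k2
      · simp [*] at k0

open Matrix in
theorem disc_sq (M : Type) [Field M] (h2 : (2:M) ≠ 0) (m : ℕ) (w : Fin (2*m) → M) (hw : ∀ i, w i ≠ 0)
    (W : Submodule M (Fin (2*m) → M)) (hW : ∀ x ∈ W, ∑ i, w i * x i ^ 2 = 0) (hd : Module.finrank M W = m) :
    IsSquare ((-1)^m * ∏ i, w i) := by
  have hB : ∀ x ∈ W, ∀ y ∈ W, ∑ i, w i * x i * y i = 0 := by
    intro x hx y hy
    have h1 := hW _ (W.add_mem hx hy)
    have h3 := hW _ hx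
    have h4 := hW _ hy
    have : 2 * ∑ i, w i * x i * y i = ∑ i, w i * (x + y) i ^ 2 - ∑ i, w i * x i ^ 2 - ∑ i, w i * y i ^ 2 := by
      rw [Finset.mul_sum, ← Finset.sum_sub_distrib, ← Finset.sum_sub_distrib]
      apply Finset.sum_congr rfl; intro i _; simp only [Pi.add_apply]; ring
    rw [h1, h3, h4] at this
    simpa [h2] using this
  obtain ⟨W', hc⟩ := Submodule.exists_isCompl W
  have hd' : Module.finrank M W' = m := by
    have := Submodule.finrank_add_eq_of_isCompl hc
    simp [hd] at this
    omega
  let b : Module.Basis (Fin m ⊕ Fin m) M (Fin (2*m) → M) :=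
    ((Module.finBasisOfFinrankEq M W hd).prod (Module.finBasisOfFinrankEq M W' hd')).map (Submodule.prodEquivOfIsCompl W W' hc)
  have hb : ∀ i, b (Sum.inl i) ∈ W := by
    intro i
    simp [b]
  let e : Fin m ⊕ Fin m ≃ Fin (2*m) := finSumFinEquiv.trans (finCongr (two_mul m).symm)
  let P : Matrix (Fin m ⊕ Fin m) (Fin m ⊕ Fin m) M := Matrix.of fun i j => b i (e j)
  have hP : P.det ≠ 0 := by
    have : LinearIndependent M P.row := by
      have := b.linearIndependent.map' (LinearMap.funLeft M M e) (LinearMap.ker_eq_bot.2 (LinearMap.funLeft_injective_of_surjective M M e e.surjective))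
      exact this
    rw [Matrix.linearIndependent_rows_iff_isUnit, Matrix.isUnit_iff_isUnit_det] at this
    exact this.ne_zero
  let G := P * Matrix.diagonal (w ∘ e) * Pᵀ
  have hG : ∀ i j, G i j = ∑ k, w k * b i k * b j k := by
    intro i j
    rw [← e.sum_comp]
    have h0 : G i j = ∑ k, (P * Matrix.diagonal (w ∘ e)) i k * Pᵀ k j := Matrix.mul_apply
    rw [h0]
    simp only [Matrix.mul_diagonal, Matrix.transpose_apply, P, Matrix.of_apply, Function.comp]
    apply Finset.sum_congr rfl; intro k _; ring
  have hGd : G.det = P.det * (∏ i, w i) * P.det := by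
    simp only [G, Matrix.det_mul, Matrix.det_transpose, Matrix.det_diagonal, Function.comp]
    rw [e.prod_comp]
  have hG11 : G.toBlocks₁₁ = 0 := by
    ext i j
    exact (hG _ _).trans (hB _ (hb i) _ (hb j))
  have hGT : G.toBlocks₂₁ = G.toBlocks₁₂ᵀ := by
    ext i j
    show G _ _ = G _ _
    rw [hG, hG]
    apply Finset.sum_congr rfl; intro k _; ring
  have hGb : G = fromBlocks 0 G.toBlocks₁₂ G.toBlocks₁₂ᵀ G.toBlocks₂₂ := by
    rw [← hG11, ← hGT, fromBlocks_toBlocks]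
  let J : Matrix (Fin m ⊕ Fin m) (Fin m ⊕ Fin m) M := fromBlocks 0 1 1 0
  have hJ : J.det = (-1)^m := by
    have h1 : (fromBlocks 1 1 0 1 : Matrix (Fin m ⊕ Fin m) (Fin m ⊕ Fin m) M) * J = fromBlocks 1 1 1 0 := by
      simp [J, fromBlocks_multiply]
    have := congrArg Matrix.det h1
    rw [Matrix.det_mul, Matrix.det_fromBlocks_zero₂₁, Matrix.det_fromBlocks_one₁₁] at this
    simpa [Matrix.det_neg] using this
  have hGJ : G * J = fromBlocks G.toBlocks₁₂ 0 G.toBlocks₂₂ G.toBlocks₁₂ᵀ := by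
    conv_lhs => rw [hGb]
    simp [J, fromBlocks_multiply]
  have key := congrArg Matrix.det hGJ
  rw [Matrix.det_mul, hJ, hGd, Matrix.det_fromBlocks_zero₁₂, Matrix.det_transpose] at key
  refine ⟨G.toBlocks₁₂.det / P.det, ?_⟩
  field_simp
  linear_combination key

theorem step_aux (k : ℕ) (M : Type) [Field M] (A B D : M) (rest : Fin k → M) (s x : M) (hs : s ≠ 0) (hB : B ≠ 0)
    (hq : A * s^2 + B + D * x^2 = 0) (r : ℕ) (W : Submodule M (Fin (k+1) → M))
    (hW : ∀ y ∈ W, -(A*B*D) * y 0 ^2 + ∑ i, rest i * y i.succ ^2 = 0) (hr : Module.finrank M W = r) :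
    ∃ W' : Submodule M (Fin (k+3) → M), (∀ y ∈ W', A * y 0 ^2 + (B * y 1 ^2 + (D * y 2 ^2 +
      ∑ i : Fin k, rest i * y i.succ.succ.succ ^2)) = 0) ∧ Module.finrank M W' = r + 1 := by
  let φ : (M × (Fin (k+1) → M)) →ₗ[M] (Fin (k+3) → M) :=
      { toFun := fun p => Fin.cons (p.1 * s) (Fin.cons (p.1 + p.2 0 * (D * x / s))
          (Fin.cons (p.1 * x - p.2 0 * (B / s)) (fun i : Fin k => p.2 i.succ)))
        map_add' := by
          intro p p'
          ext i
          refine Fin.cases ?_ (fun i => Fin.cases ?_ (fun i => Fin.cases ?_ (fun i => ?_) i) i) i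
          all_goals simp only [Fin.cons_zero, Fin.cons_succ, Pi.add_apply, Prod.fst_add, Prod.snd_add]
          all_goals ring
        map_smul' := by
          intro t p
          ext i
          refine Fin.cases ?_ (fun i => Fin.cases ?_ (fun i => Fin.cases ?_ (fun i => ?_) i) i) i
          all_goals simp only [Fin.cons_zero, Fin.cons_succ, Pi.smul_apply, Prod.smul_fst, Prod.smul_snd, smul_eq_mul, RingHom.id_apply]
          all_goals ring }
  have φ0 : ∀ p, φ p 0 = p.1 * s := fun p => rfl
  have φ1 : ∀ p, φ p 1 = p.1 + p.2 0 * (D * x / s) := fun p => rfl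
  have φ2 : ∀ p, φ p 2 = p.1 * x - p.2 0 * (B / s) := fun p => rfl
  have φ3 : ∀ p (i : Fin k), φ p i.succ.succ.succ = p.2 i.succ := fun p i => rfl
  have hφ : Function.Injective φ := by
    rw [injective_iff_map_eq_zero]
    rintro ⟨t, y⟩ h
    have h0 := φ0 (t, y)
    have h22 := φ2 (t, y)
    have h3 := φ3 (t, y)
    rw [h] at h0 h22
    have ht : t = 0 := by simpa [hs] using h0.symm
    subst ht
    have hy0 : y 0 = 0 := by simpa [hs, hB] using h22.symm
    ext i
    · rfl
    · refine Fin.cases hy0 (fun i => ?_) i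
      rw [← h3, h]; rfl
  refine ⟨LinearMap.range (φ ∘ₗ (LinearMap.prodMap LinearMap.id W.subtype)), ?_, ?_⟩
  · rintro _ ⟨⟨t, y, hy⟩, rfl⟩
    have h := hW y hy
    have h6 : (φ ∘ₗ (LinearMap.prodMap LinearMap.id W.subtype)) (t, ⟨y, hy⟩) = φ (t, y) := rfl
    rw [h6]
    simp only [φ3]
    rw [φ0, φ1, φ2]
    simp only
    generalize (∑ i, rest i * y i.succ ^ 2) = S at h ⊢
    have hS : S = A * B * D * y 0 ^ 2 := by linear_combination h
    rw [hS]
    field_simp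
    linear_combination (t^2 * s^2 + y 0 ^2 * B * D) * hq
  · rw [LinearMap.finrank_range_of_inj]
    · rw [Module.finrank_prod, hr, Module.finrank_self, add_comm]
    · intro p p' h
      have := hφ h
      simp only [LinearMap.prodMap_apply, LinearMap.id_apply, Submodule.subtype_apply, Prod.mk.injEq] at this
      exact Prod.ext this.1 (Subtype.ext this.2)

theorem split_ext (m : ℕ) : ∀ (K : Type) [Field K], (2:K) ≠ 0 → ∀ (a : Fin (2*m+2) → K), (∀ i, a i ≠ 0) →
    IsSquare ((-1)^(m+1) * ∏ i, a i) → ∀ c : K, ¬ IsSquare c →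
    ∃ (L : Type) (_ : Field L) (g : K →+* L), ¬ IsSquare (g c) ∧
      ∃ W : Submodule L (Fin (2*m+2) → L), (∀ x ∈ W, ∑ i, g (a i) * x i ^ 2 = 0) ∧ Module.finrank L W = m+1 := by
  induction m with
  | zero =>
    intro K _ h2 a ha hs c hc
    refine ⟨K, inferInstance, RingHom.id K, hc, ?_⟩
    obtain ⟨r, hr⟩ := hs
    refine ⟨Submodule.span K {(![r, a 0] : Fin 2 → K)}, ?_, ?_⟩
    · intro x hx
      obtain ⟨t, rfl⟩ := Submodule.mem_span_singleton.1 hx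
      simp [Fin.sum_univ_two, Fin.prod_univ_two] at hr ⊢
      linear_combination -a 0 * t^2 * hr
    · apply finrank_span_singleton
      intro h
      have := congrFun h 1
      exact ha 0 this
  | succ m ih =>
    intro K _ h2 a ha hs c hc
    obtain ⟨L, iL, g, s, x, hs0, hq, hgc⟩ := conic K h2 (a 0) (a 1) (a 2) c (ha _) (ha _) (ha _) hc
    let rest : Fin (2*m+1) → K := fun i => a i.succ.succ.succ
    have hL2 : (2:L) ≠ 0 := by
      have := (map_ne_zero g).2 h2
      rwa [map_ofNat] at this
    obtain ⟨M, iM, f, hfc, W, hW, hWd⟩ := ih L hL2 (Fin.cons (-(g (a 0) * g (a 1) * g (a 2))) (fun i => g (rest i)))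
      (by
        intro i
        refine Fin.cases ?_ ?_ i
        · simp [ha]
        · intro i; simp [rest, ha])
      (by
        have := hs.map g
        have e : (∏ i : Fin (2*m+1+3), a i) = a 0 * (a 1 * (a 2 * ∏ i, rest i)) := by
          rw [Fin.prod_univ_succ, Fin.prod_univ_succ, Fin.prod_univ_succ]; rfl
        change IsSquare (g ((-1) ^ (m + 1 + 1) * ∏ i : Fin (2*m+1+3), a i)) at this
        rw [e] at this
        rw [Fin.prod_univ_succ]
        simp only [Fin.cons_zero, Fin.cons_succ]
        convert this using 1
        simp only [map_mul, map_prod, map_pow, map_neg, map_one]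
        ring) (g c) hgc
    obtain ⟨W', hW', hd'⟩ := step_aux (2*m+1) M (f (g (a 0))) (f (g (a 1))) (f (g (a 2))) (fun i => f (g (rest i))) (f s) (f x)
      ((map_ne_zero f).2 hs0) (by simpa using ha 1) (by rw [← map_pow, ← map_pow, ← map_mul, ← map_mul, ← map_add, ← map_add, hq, map_zero])
      (m+1) W (by
        intro y hy
        have h := hW y hy
        rw [Fin.sum_univ_succ] at h
        simpa only [Fin.cons_zero, Fin.cons_succ, map_neg, map_mul] using h) hWd
    refine ⟨M, iM, f.comp g, hfc, W', ?_, hd'⟩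
    intro y hy
    have h := hW' y hy
    change ∑ i : Fin (2*m+1+3), (f.comp g) (a i) * y i ^ 2 = 0
    rw [Fin.sum_univ_succ, Fin.sum_univ_succ, Fin.sum_univ_succ]
    exact h

theorem witt_ge {F : Type} [Field F] {M : Type} [Field M] [Algebra F M] {m : ℕ} (w : Fin (2*m) → F) :
    m ≤ wittIndexDiag F M w ↔ ∃ W : Submodule M (Fin (2*m) → M),
    (∀ x ∈ W, ∑ i, algebraMap F M (w i) * x i ^ 2 = 0) ∧ Module.finrank M W = m := by
  have hbd : BddAbove {r | ∃ W : Submodule M (Fin (2*m) → M),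
    (∀ x ∈ W, ∑ i, algebraMap F M (w i) * x i ^ 2 = 0) ∧ Module.finrank M W = r} := by
    refine ⟨2*m, ?_⟩
    rintro r ⟨W, -, rfl⟩
    simpa using Submodule.finrank_le W
  constructor
  · intro h
    have hne : {r | ∃ W : Submodule M (Fin (2*m) → M),
      (∀ x ∈ W, ∑ i, algebraMap F M (w i) * x i ^ 2 = 0) ∧ Module.finrank M W = r}.Nonempty :=
      ⟨0, ⊥, by simp, by simp⟩
    obtain ⟨W, hW, hr⟩ := Nat.sSup_mem hne hbd
    change _ = wittIndexDiag F M w at hr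
    rw [← hr] at h
    let v : Fin m → (Fin (2*m) → M) := fun i => (Module.finBasis M W (Fin.castLE h i) : W)
    have hv : LinearIndependent M v :=
      ((Module.finBasis M W).linearIndependent.map' W.subtype W.ker_subtype).comp _ (Fin.castLE_injective h)
    refine ⟨Submodule.span M (Set.range v), ?_, by simpa using finrank_span_eq_card hv⟩
    intro x hx
    apply hW
    refine Submodule.span_le.2 ?_ hx
    rintro _ ⟨i, rfl⟩
    exact Subtype.coe_prop _
  · rintro hW
    exact le_csSup hbd hW

theorem claimA (F : Type) [Field F] (h2 : (2 : F) ≠ 0)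
    (m : ℕ) (hm : 0 < m) (w w' : Fin (2 * m) → F)
    (hw : ∀ i, w i ≠ 0) (hw' : ∀ i, w' i ≠ 0)
    (hW : ∀ (M : Type) [Field M] [Algebra F M], wittIndexDiag F M w = wittIndexDiag F M w')
    (K : Type) [Field K] (f : F →+* K) (h : IsSquare (f ((-1)^m * ∏ i, w i))) :
    IsSquare (f ((-1)^m * ∏ i, w' i)) := by
  by_contra hc
  obtain ⟨n, rfl⟩ : ∃ n, m = n + 1 := ⟨m - 1, by omega⟩
  have hK2 : (2:K) ≠ 0 := by
    have := (map_ne_zero f).2 h2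
    rwa [map_ofNat] at this
  obtain ⟨L, iL, g, hgc, hWL⟩ := split_ext n K hK2 (fun i => f (w i)) (fun i => (map_ne_zero f).2 (hw i))
    (by
      simp only [map_mul, map_pow, map_neg, map_one, map_prod] at h
      exact h) _ hc
  let alg : Algebra F L := (g.comp f).toAlgebra
  have h1 : n+1 ≤ wittIndexDiag F L w := (witt_ge w).2 hWL
  rw [hW L] at h1
  obtain ⟨W, hW1, hW2⟩ := (witt_ge w').1 h1
  have hL2 : (2:L) ≠ 0 := by
    have := (map_ne_zero g).2 hK2
    rwa [map_ofNat] at this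
  have := disc_sq L hL2 (n+1) (fun i => g (f (w' i))) (fun i => by simpa using hw' i) W hW1 hW2
  apply hgc
  simpa only [map_mul, map_pow, map_neg, map_one, map_prod] using this

end aux

/-- Let `q = ⟨w⟩` and `q' = ⟨w'⟩` be nondegenerate quadratic forms over `F` (char `≠ 2`)
of the same even dimension `2m`, such that `i_w(q_M) = i_w(q'_M)` for every field
extension `M/F`.  Then `q` and `q'` have the same signed discriminant, i.e. the product
of their signed discriminants is a square. -/
theorem same_wittIndices_implies_same_discriminant
    (F : Type) [Field F] (h2 : (2 : F) ≠ 0)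
    (m : ℕ) (hm : 0 < m) (w w' : Fin (2 * m) → F)
    (hw : ∀ i, w i ≠ 0) (hw' : ∀ i, w' i ≠ 0)
    (hW : ∀ (M : Type) [Field M] [Algebra F M], wittIndexDiag F M w = wittIndexDiag F M w') :
    IsSquare (((-1 : F) ^ (m * (2 * m - 1)) * ∏ i, w i) *
      ((-1 : F) ^ (m * (2 * m - 1)) * ∏ i, w' i)) := by
  have hsign : ((-1 : F) ^ (m * (2 * m - 1))) = (-1)^m := by
    obtain ⟨n, rfl⟩ : ∃ n, m = n + 1 := ⟨m - 1, by omega⟩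
    rw [mul_comm, pow_mul]
    congr 1
    exact Odd.neg_one_pow ⟨n, by omega⟩
  rw [hsign]
  obtain ⟨K, iK, g, s, hs, hK⟩ := lemQ F h2 ((-1)^m * ∏ i, w i)
  have h := claimA F h2 m hm w w' hw hw' hW K g ⟨s, by rw [← hs, sq]⟩
  rcases hK _ h with h | h
  · have h' := claimA F h2 m hm w' w hw' hw (fun M _ _ => (hW M).symm) F (RingHom.id F) h
    exact IsSquare.mul h' h
  · rwa [mul_comm] at h
end
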